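/- Let α > 0 be a non-integer real, let d_s > 0, T_i > 0, ν > 0, ω > 0. Define F_s = −T_i 2^{α+1} d_s^{α/2} M(α/2 + 1/2, 1/2, ν²ω²) / U(α/2 + 1/2, 1/2, ν²ω²) and E_s = −ν ω M(−α/2 + 1/2, 3/2, −ν²ω²) F_s / M(−α/2, 1/2, −ν²ω²), and set Ψ_s(x,t) = t^{α/2} [ E_s M(−α/2, 1/2, −η_s²) + F_s η_s M(−α/2 + 1/2, 3/2, −η_s²) ] with η_s = x/(2√(d_s t)). Then for every x > 0, lim_{t → 0⁺} Ψ_s(x,t) = −T_i x^α. -/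

import Mathlib

noncomputable def poch (a : ℝ) (s : ℕ) : ℝ := ∏ i ∈ Finset.range s, (a + i)

/-- Kummer's confluent hypergeometric function `M(a,b,z)`,
defined by the everywhere-convergent series `M(a,b,z) = Σ_{s} (a)_s z^s / ((b)_s s!)`. -/
noncomputable def kummerM (a b z : ℝ) : ℝ :=
  ∑' s : ℕ, poch a s / (poch b s * (Nat.factorial s)) * z ^ s

/-- Tricomi's confluent hypergeometric function
`U(a,b,z) = (1/Γ(a)) ∫_0^∞ e^{−z t} t^{a−1} (1+t)^{b−a−1} dt`. -/
noncomputable def tricomiU (a b z : ℝ) : ℝ :=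
  (1 / Real.Gamma a) *
    ∫ t in Set.Ioi (0:ℝ), Real.exp (-z * t) * t ^ (a - 1) * (1 + t) ^ (b - a - 1)

/-!
For `a > 0` let `G(η) = ∫₀^∞ u^{2a-1} e^{-(u-η)²} du`. Expanding `e^{2ηu}` in `G` and applying
Kummer's transformation `M(b-a,b,-z) = e^{-z} M(a,b,z)` identifies the even part of `G` with
`M(1/2-a, 1/2, -η²)` and its odd part with `η M(1-a, 3/2, -η²)`. Since `G(η) ~ √π η^{2a-1}` and
`G(-η)` decays exponentially as `η → ∞`, every combination `E M(1/2-a, 1/2, -η²) +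
F η M(1-a, 3/2, -η²)` grows like `√π (E / Γ(a) + F / (2 Γ(a+1/2))) η^{2a-1}`.

On the other hand `Γ(a) Γ(a+1/2) U(a, 1/2, η²) = 2 √π e^{η²} G(-η)`, by Tonelli and the
Cauchy–Schlömilch integral. So `U` is an explicit combination of the two functions above, which
makes the coefficient of `η^{2a-1}` collapse for the prescribed `E` and `F`. Here `α = 2a - 1`, and
`t → 0⁺` means that the similarity variable `η = x / (2√(d t))` tends to `∞`.
-/

open Real Set Filter MeasureTheory Topology
open Finset.HasAntidiagonal (antidiagonal mem_antidiagonal)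
open scoped ENNReal Nat

section Kummer

lemma poch_zero (a : ℝ) : poch a 0 = 1 := by
  simp [poch]

lemma poch_succ (a : ℝ) (n : ℕ) : poch a (n + 1) = poch a n * (a + n) :=
  Finset.prod_range_succ _ n

lemma poch_add (a : ℝ) (m n : ℕ) : poch a (m + n) = poch a m * poch (a + m) n := by
  simp [poch, Finset.prod_range_add, add_assoc]

lemma poch_succ' (a : ℝ) (n : ℕ) : poch a (n + 1) = a * poch (a + 1) n := by
  rw [add_comm n 1, poch_add, poch_succ, poch_zero]
  simp

lemma poch_ne_zero {b : ℝ} (hb : ∀ n : ℕ, b ≠ -n) (n : ℕ) : poch b n ≠ 0 :=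
  Finset.prod_ne_zero_iff.mpr fun i _ ↦ mt eq_neg_of_add_eq_zero_left (hb i)

lemma ne_neg_natCast_of_pos {b : ℝ} (hb : 0 < b) (n : ℕ) : b ≠ -n :=
  ((neg_nonpos.mpr n.cast_nonneg).trans_lt hb).ne'

lemma sum_antidiagonal_choose_mul_poch (a b : ℝ) (n : ℕ) :
    ∑ ij ∈ antidiagonal n,
        (n.choose ij.1 : ℝ) * ((-1) ^ ij.1 * poch a ij.1 * poch (b + ij.1) ij.2) =
      poch (b - a) n := by
  induction n generalizing a b with
  | zero => simp [poch_zero]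
  | succ n ih =>
    rw [Finset.sum_antidiagonal_choose_succ_mul
      fun i j ↦ (-1) ^ i * poch a i * poch (b + i) j]
    have raise_right : ∑ ij ∈ antidiagonal n,
        (n.choose ij.1 : ℝ) * ((-1) ^ ij.1 * poch a ij.1 * poch (b + ij.1) (ij.2 + 1)) =
          poch (b - a) n * (b + n) := by
      rw [← ih a b, Finset.sum_mul]
      refine Finset.sum_congr rfl fun ij hij ↦ ?_
      rw [poch_succ, ← mem_antidiagonal.mp hij]
      push_cast
      ring
    have raise_left : ∑ ij ∈ antidiagonal n,
        (n.choose ij.2 : ℝ) * ((-1) ^ (ij.1 + 1) * poch a (ij.1 + 1) *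
          poch (b + (ij.1 + 1 : ℕ)) ij.2) = -a * poch (b - a) n := by
      rw [← add_sub_add_right_eq_sub b a 1, ← ih (a + 1) (b + 1), Finset.mul_sum]
      refine Finset.sum_congr rfl fun ij hij ↦ ?_
      rw [poch_succ', Nat.choose_symm_of_eq_add (mem_antidiagonal.mp hij).symm]
      push_cast
      ring_nf
    rw [raise_right, raise_left, poch_succ]
    ring

lemma summable_kummerM (a b z : ℝ) :
    Summable fun s : ℕ ↦ poch a s / (poch b s * s !) * z ^ s := by
  have ratio_tendsto : Tendsto (fun s : ℕ ↦ (a + s) / (b + s) * (z / (s + 1))) atTop (𝓝 0) := by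
    have quotient_tendsto : Tendsto (fun s : ℕ ↦ (a + s) / (b + s)) atTop (𝓝 1) := by
      simpa using tendsto_add_mul_div_add_mul_atTop_nhds a b (1 : ℝ) one_ne_zero
    have reciprocal_tendsto : Tendsto (fun s : ℕ ↦ z / ((s : ℝ) + 1)) atTop (𝓝 0) := by
      simpa [div_eq_mul_inv] using
        (tendsto_one_div_add_atTop_nhds_zero_nat (𝕜 := ℝ)).const_mul z
    simpa using quotient_tendsto.mul reciprocal_tendsto
  refine summable_of_ratio_norm_eventually_le (r := 1 / 2) (by norm_num) ?_
  filter_upwards [ratio_tendsto.norm.eventually_le_const (u := 1 / 2) (by norm_num)] with s hs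
  have term_succ : poch a (s + 1) / (poch b (s + 1) * (s + 1)!) * z ^ (s + 1) =
      (a + s) / (b + s) * (z / (s + 1)) * (poch a s / (poch b s * s !) * z ^ s) := by
    rw [poch_succ, poch_succ, Nat.factorial_succ, pow_succ, Nat.cast_mul, Nat.cast_add_one]
    simp only [div_eq_mul_inv, mul_inv]
    ring
  rw [term_succ, norm_mul]
  gcongr

/-- The series of `e^{-z}` and `M(a,b,z)` are multiplied by Cauchy's rule; the coefficients of the
product are evaluated by the Vandermonde sum. -/
theorem kummerM_sub_neg (a : ℝ) {b : ℝ} (hb : ∀ n : ℕ, b ≠ -n) (z : ℝ) :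
    kummerM (b - a) b (-z) = exp (-z) * kummerM a b z := by
  rw [mul_comm, exp_eq_exp_ℝ, NormedSpace.exp_eq_tsum_div, kummerM, kummerM,
    tsum_mul_tsum_eq_tsum_sum_antidiagonal_of_summable_norm (summable_kummerM a b z).norm
      (summable_pow_div_factorial (-z)).norm]
  refine tsum_congr fun n ↦ ?_
  rw [← sum_antidiagonal_choose_mul_poch, Finset.sum_div, Finset.sum_mul]
  refine Finset.sum_congr rfl fun ⟨i, j⟩ h_sum ↦ ?_
  obtain rfl := mem_antidiagonal.mp h_sum
  have hi := poch_ne_zero hb i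
  have hij := poch_ne_zero hb (i + j)
  rw [Nat.cast_add_choose]
  rw [poch_add] at hij ⊢
  have := right_ne_zero_of_mul hij
  have sign : ((-1 : ℝ) ^ i) * (-z) ^ (i + j) = z ^ i * (-z) ^ j := by
    rw [pow_add, ← mul_assoc, ← mul_pow, neg_one_mul, neg_neg]
  field_simp
  linear_combination poch a i * sign

end Kummer

section GaussianMoment

variable {a : ℝ}

lemma Gamma_add_natCast_eq_mul_poch (ha : 0 < a) (n : ℕ) :
    Gamma (a + n) = Gamma a * poch a n := by
  induction n with
  | zero => simp [poch_zero]
  | succ n ih =>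
    rw [Nat.cast_add_one, ← add_assoc, Gamma_add_one (by positivity), ih, poch_succ]
    ring

lemma factorial_two_mul_eq_poch (n : ℕ) : ((2 * n)! : ℝ) = 4 ^ n * (poch (1 / 2) n * n !) := by
  induction n with
  | zero => simp [poch_zero]
  | succ n ih =>
    rw [show 2 * (n + 1) = 2 * n + 1 + 1 by ring, Nat.factorial_succ, Nat.factorial_succ,
      Nat.factorial_succ n, poch_succ]
    push_cast
    rw [ih]
    ring

lemma factorial_two_mul_add_one_eq_poch (n : ℕ) :
    ((2 * n + 1)! : ℝ) = 4 ^ n * (poch (3 / 2) n * n !) := by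
  have shift : poch (1 / 2) n * (1 / 2 + n) = 1 / 2 * poch (3 / 2) n := by
    rw [← poch_succ, poch_succ']
    norm_num
  rw [Nat.factorial_succ, Nat.cast_mul, factorial_two_mul_eq_poch]
  push_cast
  linear_combination 2 * 4 ^ n * (n ! : ℝ) * shift

/-- The half-line moment `∫_0^∞ u^{2a-1} e^{-(u-η)²} du` of a Gaussian centred at `η`; up to an
elementary factor it is a parabolic cylinder function. It carries both `M(·,1/2,·)` and
`U(·,1/2,·)`, and the exponent is written `2a - 1` so that the parameter `a` is the same in all
three. -/
noncomputable def gaussianMoment (a η : ℝ) : ℝ :=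
  ∫ u in Ioi 0, u ^ (2 * a - 1) * exp (-(u - η) ^ 2)

lemma exp_neg_sub_sq (u η : ℝ) :
    exp (-(u - η) ^ 2) = exp (-η ^ 2) * (exp (-u ^ 2) * exp (2 * η * u)) := by
  rw [← exp_add, ← exp_add]
  ring_nf

lemma integrableOn_gaussianMoment (ha : 0 < a) (η : ℝ) :
    IntegrableOn (fun u ↦ u ^ (2 * a - 1) * exp (-(u - η) ^ 2)) (Ioi 0) := by
  have dominating := (integrableOn_rpow_mul_exp_neg_mul_sq (b := 1 / 2) (by norm_num)
    (s := 2 * a - 1) (by linarith)).const_mul (exp (η ^ 2))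
  refine Integrable.mono' dominating (by fun_prop) ?_
  filter_upwards [ae_restrict_mem measurableSet_Ioi] with u (hu : 0 < u)
  have completed_square : exp (-(u - η) ^ 2) ≤ exp (η ^ 2) * exp (-(1 / 2) * u ^ 2) := by
    rw [← exp_add, exp_le_exp]
    nlinarith [sq_nonneg (u - 2 * η)]
  rw [norm_of_nonneg (by positivity), mul_left_comm]
  gcongr

lemma gaussianMoment_pos (ha : 0 < a) (η : ℝ) : 0 < gaussianMoment a η := by
  refine (setIntegral_pos_iff_support_of_nonneg_ae ?_ (integrableOn_gaussianMoment ha η)).mpr ?_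
  · filter_upwards [ae_restrict_mem measurableSet_Ioi] with u (hu : 0 < u)
    simp only [Pi.zero_apply]
    positivity
  · have support_inter : Function.support (fun u ↦ u ^ (2 * a - 1) * exp (-(u - η) ^ 2)) ∩ Ioi 0 =
        Ioi 0 := inter_eq_right.mpr fun u (hu : 0 < u) ↦ by
      rw [Function.mem_support]
      positivity
    rw [support_inter]
    simp

lemma integral_gaussianMoment_term (ha : 0 < a) (η : ℝ) (m : ℕ) :
    ∫ u in Ioi 0, u ^ (2 * a - 1) * exp (-u ^ 2) * ((2 * η * u) ^ m / m !) =
      Gamma (a + m / 2) / 2 * ((2 * η) ^ m / m !) := by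
  have gamma_integral := integral_rpow_mul_exp_neg_rpow (p := 2) (q := 2 * a - 1 + m) two_pos
    (by linarith [m.cast_nonneg (α := ℝ)])
  rw [show (2 * a - 1 + m + 1) / 2 = a + m / 2 by ring] at gamma_integral
  calc _ = ∫ u in Ioi 0, u ^ (2 * a - 1 + m) * exp (-u ^ (2 : ℝ)) * ((2 * η) ^ m / m !) := by
        refine setIntegral_congr_fun measurableSet_Ioi fun u (hu : 0 < u) ↦ ?_
        simp only [rpow_add hu, rpow_natCast, rpow_two, mul_pow (2 * η)]
        ring
    _ = _ := by rw [integral_mul_const, gamma_integral]; ring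

lemma hasSum_gaussianMoment (ha : 0 < a) (η : ℝ) :
    HasSum (fun m : ℕ ↦ Gamma (a + m / 2) / 2 * ((2 * η) ^ m / m !))
      (exp (η ^ 2) * gaussianMoment a η) := by
  have exp_series (y : ℝ) : HasSum (fun m : ℕ ↦ y ^ m / m !) (exp y) := by
    rw [exp_eq_exp_ℝ]
    exact NormedSpace.expSeries_div_hasSum_exp y
  have expand (u y : ℝ) : exp (y ^ 2) * (u ^ (2 * a - 1) * exp (-(u - y) ^ 2)) =
      u ^ (2 * a - 1) * exp (-u ^ 2) * exp (2 * y * u) := by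
    rw [exp_neg_sub_sq, exp_neg (y ^ 2)]
    field_simp
  have bound_hasSum (u : ℝ) : HasSum
      (fun m : ℕ ↦ u ^ (2 * a - 1) * exp (-u ^ 2) * ((2 * |η| * u) ^ m / m !))
      (exp (|η| ^ 2) * (u ^ (2 * a - 1) * exp (-(u - |η|) ^ 2))) := by
    rw [expand]
    exact (exp_series _).mul_left _
  simp_rw [← integral_gaussianMoment_term ha η, gaussianMoment, ← integral_const_mul, expand]
  refine hasSum_integral_of_dominated_convergence
    (fun m u ↦ u ^ (2 * a - 1) * exp (-u ^ 2) * ((2 * |η| * u) ^ m / m !)) (by fun_prop)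
    (fun m ↦ ?_) (.of_forall fun u ↦ (bound_hasSum u).summable) ?_
    (.of_forall fun u ↦ (exp_series _).mul_left _)
  · filter_upwards [ae_restrict_mem measurableSet_Ioi] with u (hu : 0 < u)
    simp [abs_of_pos hu, abs_of_pos (rpow_pos_of_pos hu _)]
  · simp_rw [(bound_hasSum _).tsum_eq]
    exact (integrableOn_gaussianMoment ha |η|).const_mul _

lemma exp_sq_mul_gaussianMoment_add_neg (ha : 0 < a) (η : ℝ) :
    exp (η ^ 2) * (gaussianMoment a η + gaussianMoment a (-η)) =
      Gamma a * kummerM a (1 / 2) (η ^ 2) := by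
  have both := (hasSum_gaussianMoment ha η).add (hasSum_gaussianMoment ha (-η))
  rw [neg_sq, ← mul_add] at both
  have even_part := ((mul_right_injective₀ two_ne_zero).hasSum_iff fun m hm ↦ ?_).mpr both
  · rw [kummerM, ← tsum_mul_left, ← even_part.tsum_eq]
    refine tsum_congr fun s ↦ ?_
    have := poch_ne_zero (ne_neg_natCast_of_pos one_half_pos) s
    simp only [Function.comp_apply, Nat.cast_mul, Nat.cast_ofNat, mul_neg,
      (even_two_mul s).neg_pow, mul_div_cancel_left₀ (s : ℝ) two_ne_zero,
      Gamma_add_natCast_eq_mul_poch ha, factorial_two_mul_eq_poch, pow_mul, mul_pow]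
    field_simp
    norm_num
    ring
  · have hm : Odd m := Nat.not_even_iff_odd.mp fun h ↦ hm (h.two_dvd.imp fun _ ↦ Eq.symm)
    rw [mul_neg, hm.neg_pow]
    ring

lemma exp_sq_mul_gaussianMoment_sub_neg (ha : 0 < a) (η : ℝ) :
    exp (η ^ 2) * (gaussianMoment a η - gaussianMoment a (-η)) =
      2 * Gamma (a + 1 / 2) * (η * kummerM (a + 1 / 2) (3 / 2) (η ^ 2)) := by
  have both := (hasSum_gaussianMoment ha η).sub (hasSum_gaussianMoment ha (-η))
  rw [neg_sq, ← mul_sub] at both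
  have odd_injective : Function.Injective fun s : ℕ ↦ 2 * s + 1 :=
    (add_left_injective 1).comp (mul_right_injective₀ two_ne_zero)
  have odd_part := (odd_injective.hasSum_iff fun m hm ↦ ?_).mpr both
  · rw [kummerM, ← mul_assoc, ← tsum_mul_left, ← odd_part.tsum_eq]
    refine tsum_congr fun s ↦ ?_
    have := poch_ne_zero (ne_neg_natCast_of_pos (b := 3 / 2) (by norm_num)) s
    have half_index : a + ((2 * s + 1 : ℕ) : ℝ) / 2 = a + 1 / 2 + s := by
      push_cast
      ring
    simp only [Function.comp_apply, mul_neg, (odd_two_mul_add_one s).neg_pow, half_index,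
      Gamma_add_natCast_eq_mul_poch (add_pos ha one_half_pos),
      factorial_two_mul_add_one_eq_poch, pow_succ _ (2 * s), pow_mul, mul_pow]
    field_simp
    norm_num
    ring
  · have hm : Even m := Nat.not_odd_iff_even.mp fun h ↦ hm (h.imp fun _ ↦ Eq.symm)
    rw [mul_neg, hm.neg_pow, sub_self]

theorem gaussianMoment_add_neg (ha : 0 < a) (η : ℝ) :
    gaussianMoment a η + gaussianMoment a (-η) =
      Gamma a * kummerM (1 / 2 - a) (1 / 2) (-η ^ 2) := by
  rw [kummerM_sub_neg a (ne_neg_natCast_of_pos one_half_pos), mul_left_comm,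
    ← exp_sq_mul_gaussianMoment_add_neg ha, ← mul_assoc, ← exp_add, neg_add_cancel, exp_zero,
    one_mul]

theorem gaussianMoment_sub_neg (ha : 0 < a) (η : ℝ) :
    gaussianMoment a η - gaussianMoment a (-η) =
      2 * Gamma (a + 1 / 2) * (η * kummerM (1 - a) (3 / 2) (-η ^ 2)) := by
  rw [show 1 - a = 3 / 2 - (a + 1 / 2) by ring,
    kummerM_sub_neg _ (ne_neg_natCast_of_pos (b := 3 / 2) (by norm_num)), mul_left_comm η,
    mul_left_comm, ← exp_sq_mul_gaussianMoment_sub_neg ha, ← mul_assoc, ← exp_add,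
    neg_add_cancel, exp_zero, one_mul]

lemma integral_exp_neg_sq : ∫ v : ℝ, exp (-v ^ 2) = √π := by
  simpa using integral_gaussian 1

lemma gaussianMoment_eq_rpow_mul_integral (a : ℝ) {η : ℝ} (hη : 0 < η) :
    gaussianMoment a η =
      η ^ (2 * a - 1) * (η * ∫ s in Ioi 0, s ^ (2 * a - 1) * exp (-(η * (1 - s)) ^ 2)) := by
  have scaled := integral_comp_mul_left_Ioi
    (fun u ↦ u ^ (2 * a - 1) * exp (-(u - η) ^ 2)) 0 hη
  rw [mul_zero, smul_eq_mul, ← gaussianMoment] at scaled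
  have pull_out : ∫ s in Ioi 0, (η * s) ^ (2 * a - 1) * exp (-(η * s - η) ^ 2) =
      η ^ (2 * a - 1) * ∫ s in Ioi 0, s ^ (2 * a - 1) * exp (-(η * (1 - s)) ^ 2) := by
    rw [← integral_const_mul]
    refine setIntegral_congr_fun measurableSet_Ioi fun s (hs : 0 < s) ↦ ?_
    simp only [mul_rpow hη.le hs.le]
    ring_nf
  rw [mul_left_comm, ← pull_out, scaled, mul_inv_cancel_left₀ hη.ne']

lemma tendsto_norm_mul_exp_neg_sq_cobounded :
    Tendsto (fun x : ℝ ↦ ‖x‖ * exp (-x ^ 2)) (Bornology.cobounded ℝ) (𝓝 0) := by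
  have decay : Tendsto (fun y : ℝ ↦ y * exp (-y ^ 2)) atTop (𝓝 0) := by
    refine squeeze_zero' ?_ ?_ (tendsto_pow_mul_exp_neg_atTop_nhds_zero 1)
    · filter_upwards [eventually_ge_atTop 0] with y hy using by positivity
    · filter_upwards [eventually_ge_atTop 1] with y hy
      rw [pow_one]
      gcongr
      nlinarith
  refine (decay.comp tendsto_norm_cobounded_atTop).congr fun x ↦ ?_
  simp [sq_abs]

lemma tendsto_mul_integral_exp_neg_mul_sq_mul {g : ℝ → ℝ} {x₀ : ℝ} (g_integrable : Integrable g)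
    (g_continuousAt : ContinuousAt g x₀) :
    Tendsto (fun c : ℝ ↦ c * ∫ s, exp (-(c * (x₀ - s)) ^ 2) * g s) atTop (𝓝 (√π * g x₀)) := by
  have density_nonneg (x : ℝ) : 0 ≤ exp (-x ^ 2) / √π := by positivity
  have peak := (tendsto_integral_comp_smul_smul_of_integrable' density_nonneg
    (by rw [integral_div, integral_exp_neg_sq, div_self (sqrt_ne_zero'.mpr pi_pos)])
    (by simpa [mul_div_assoc] using tendsto_norm_mul_exp_neg_sq_cobounded.div_const √π)
    g_integrable g_continuousAt).const_mul √π
  refine peak.congr fun c ↦ ?_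
  rw [← integral_const_mul, ← integral_const_mul]
  congr with s
  simp only [Module.finrank_self, pow_one, smul_eq_mul]
  field_simp

lemma tendsto_sqrt_sq_sub_one_atTop : Tendsto (fun η : ℝ ↦ √(η ^ 2 - 1)) atTop atTop :=
  tendsto_sqrt_atTop.comp
    (tendsto_atTop_add_const_right _ _ (tendsto_pow_atTop two_ne_zero))

lemma tendsto_div_sqrt_sq_sub_one : Tendsto (fun η : ℝ ↦ η / √(η ^ 2 - 1)) atTop (𝓝 1) := by
  have ratio : Tendsto (fun η : ℝ ↦ (√(1 - η⁻¹ ^ 2))⁻¹) atTop (𝓝 1) := by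
    have := ((tendsto_inv_atTop_zero (𝕜 := ℝ)).pow 2).const_sub 1
    simpa using this.sqrt.inv₀ (by simp)
  refine ratio.congr' ?_
  filter_upwards [eventually_gt_atTop 0] with η hη
  rw [show η ^ 2 - 1 = η ^ 2 * (1 - η⁻¹ ^ 2) by field_simp, sqrt_mul (sq_nonneg η),
    sqrt_sq hη.le, div_mul_cancel_left₀ hη.ne']

/-- With `c = √(η² - 1)`, the factor `e^{-(η(1-s))²}` splits into the integrable weight
`e^{-(s-1)²}` and the approximate identity `c e^{-(c(1-s))²} / √π` concentrating at `s = 1`. -/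
theorem tendsto_gaussianMoment_div_rpow (ha : 0 < a) :
    Tendsto (fun η ↦ gaussianMoment a η / η ^ (2 * a - 1)) atTop (𝓝 √π) := by
  set g : ℝ → ℝ := (Ioi 0).indicator fun s ↦ s ^ (2 * a - 1) * exp (-(s - 1) ^ 2) with hg
  have g_integrable : Integrable g :=
    (integrable_indicator_iff measurableSet_Ioi).mpr (integrableOn_gaussianMoment ha 1)
  have g_continuousAt : ContinuousAt g 1 := by
    refine ContinuousAt.congr (f := fun s ↦ s ^ (2 * a - 1) * exp (-(s - 1) ^ 2)) ?_ ?_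
    · exact (continuousAt_id.rpow_const (.inl one_ne_zero)).mul (by fun_prop)
    · filter_upwards [Ioi_mem_nhds one_pos] with s hs
      rw [hg, indicator_of_mem hs]
  have limit := tendsto_div_sqrt_sq_sub_one.mul <|
    (tendsto_mul_integral_exp_neg_mul_sq_mul g_integrable g_continuousAt).comp
      tendsto_sqrt_sq_sub_one_atTop
  have g_one : g 1 = 1 := by simp [hg]
  rw [g_one, mul_one, one_mul] at limit
  refine limit.congr' ?_
  filter_upwards [eventually_gt_atTop 1] with η hη
  have hc : 0 < η ^ 2 - 1 := by nlinarith
  have split (s : ℝ) : exp (-(η * (1 - s)) ^ 2) =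
      exp (-(√(η ^ 2 - 1) * (1 - s)) ^ 2) * exp (-(s - 1) ^ 2) := by
    rw [← exp_add, mul_pow √_, sq_sqrt hc.le]
    ring_nf
  rw [gaussianMoment_eq_rpow_mul_integral a (by linarith),
    mul_div_cancel_left₀ _ (by positivity),
    ← integral_indicator measurableSet_Ioi, Function.comp_apply, ← mul_assoc,
    div_mul_cancel₀ _ (sqrt_ne_zero'.mpr hc)]
  congr with s
  simp only [hg, split, indicator_apply, mul_ite, mul_zero]
  congr 1
  ring

theorem tendsto_gaussianMoment_neg_div_rpow (ha : 0 < a) :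
    Tendsto (fun η ↦ gaussianMoment a (-η) / η ^ (2 * a - 1)) atTop (𝓝 0) := by
  have le_decay {η : ℝ} (hη : 1 ≤ η) :
      gaussianMoment a (-η) ≤ exp (-1 * η) * gaussianMoment a 0 := by
    rw [gaussianMoment, gaussianMoment, ← integral_const_mul]
    refine setIntegral_mono_on (integrableOn_gaussianMoment ha _)
      ((integrableOn_gaussianMoment ha 0).const_mul _) measurableSet_Ioi fun u (hu : 0 < u) ↦ ?_
    rw [mul_left_comm, ← exp_add]
    gcongr
    nlinarith
  have decay := (tendsto_rpow_mul_exp_neg_mul_atTop_nhds_zero (-(2 * a - 1)) 1 one_pos).mul_const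
    (gaussianMoment a 0)
  rw [zero_mul] at decay
  refine squeeze_zero' ?_ ?_ decay
  · filter_upwards [eventually_gt_atTop 0] with η hη
    have := gaussianMoment_pos ha (-η)
    positivity
  · filter_upwards [eventually_ge_atTop 1] with η hη
    rw [rpow_neg (by linarith), mul_assoc, inv_mul_eq_div]
    gcongr
    exact le_decay hη

end GaussianMoment

section Tricomi

variable {a c η : ℝ}

lemma lintegral_ofReal_const_mul {β : Type*} [MeasurableSpace β] (μ : Measure β) {K : ℝ}
    (hK : 0 ≤ K) (f : β → ℝ) :
    ∫⁻ x, .ofReal (K * f x) ∂μ = .ofReal K * ∫⁻ x, .ofReal (f x) ∂μ := by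
  simp_rw [ENNReal.ofReal_mul hK]
  exact lintegral_const_mul' _ _ ENNReal.ofReal_ne_top

lemma lintegral_exp_neg_sq : ∫⁻ v : ℝ, .ofReal (exp (-v ^ 2)) = .ofReal √π := by
  rw [← ofReal_integral_eq_lintegral_ofReal (by simpa using integrable_exp_neg_mul_sq one_pos)
    (.of_forall fun v ↦ (exp_pos _).le), integral_exp_neg_sq]

lemma hasDerivAt_const_div_id (c : ℝ) {s : ℝ} (hs : s ≠ 0) :
    HasDerivAt (fun s ↦ c / s) (-(c / s ^ 2)) s := by
  simpa [div_eq_mul_inv] using (hasDerivAt_inv hs).const_mul c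

lemma antitoneOn_const_div_Ioi (hc : 0 < c) : AntitoneOn (fun s ↦ c / s) (Ioi 0) :=
  fun _ hs _ _ h ↦ div_le_div_of_nonneg_left hc.le hs h

lemma image_const_div_Ioi (hc : 0 < c) : (fun s ↦ c / s) '' Ioi 0 = Ioi 0 := by
  ext y
  refine ⟨?_, fun (hy : 0 < y) ↦ ⟨c / y, div_pos hc hy, div_div_cancel₀ hc.ne'⟩⟩
  rintro ⟨s, hs, rfl⟩
  exact div_pos hc hs

lemma image_id_sub_const_div_Ioi (hc : 0 < c) :
    (fun s ↦ s - c / s) '' Ioi 0 = univ := by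
  refine eq_univ_of_forall fun y ↦ ?_
  have abs_lt_sqrt : |y| < √(y ^ 2 + 4 * c) := by
    rw [← sqrt_sq_eq_abs]
    exact sqrt_lt_sqrt (sq_nonneg y) (by linarith)
  have root_pos : 0 < (y + √(y ^ 2 + 4 * c)) / 2 := by linarith [neg_abs_le y]
  refine ⟨(y + √(y ^ 2 + 4 * c)) / 2, root_pos, ?_⟩
  have quadratic : ((y + √(y ^ 2 + 4 * c)) / 2) ^ 2 - c = (y + √(y ^ 2 + 4 * c)) / 2 * y := by
    linear_combination sq_sqrt (show 0 ≤ y ^ 2 + 4 * c by positivity) / 4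
  generalize (y + √(y ^ 2 + 4 * c)) / 2 = s at root_pos quadratic
  field_simp
  exact quadratic

lemma lintegral_Ioi_comp_const_div (hc : 0 < c) (f : ℝ → ℝ≥0∞) :
    ∫⁻ s in Ioi 0, f s = ∫⁻ s in Ioi 0, .ofReal (c / s ^ 2) * f (c / s) := by
  have change := lintegral_image_eq_lintegral_deriv_mul_of_antitoneOn measurableSet_Ioi
    (fun s (hs : 0 < s) ↦ (hasDerivAt_const_div_id c hs.ne').hasDerivWithinAt)
    (antitoneOn_const_div_Ioi hc) f
  simpa only [image_const_div_Ioi hc, neg_neg] using change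

lemma lintegral_comp_id_sub_const_div (hc : 0 < c) (f : ℝ → ℝ≥0∞) :
    ∫⁻ x, f x = ∫⁻ s in Ioi 0, .ofReal (1 + c / s ^ 2) * f (s - c / s) := by
  have change := lintegral_image_eq_lintegral_deriv_mul_of_monotoneOn measurableSet_Ioi
    (fun s (hs : 0 < s) ↦
      ((hasDerivAt_id s).sub (hasDerivAt_const_div_id c hs.ne')).hasDerivWithinAt)
    (fun s hs t ht h ↦ sub_le_sub h (antitoneOn_const_div_Ioi hc hs ht h)) f
  simpa only [Pi.sub_def, id_eq, image_id_sub_const_div_Ioi hc, setLIntegral_univ,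
    sub_neg_eq_add] using change

/-- Since `s ↦ c / s` sends `s - c / s` to its negative, averaging with the substituted integral
supplies the Jacobian `1 + c / s²` of `s ↦ s - c / s`. -/
theorem two_mul_lintegral_Ioi_comp_id_sub_const_div (hc : 0 < c) {f : ℝ → ℝ≥0∞}
    (f_measurable : Measurable f) (f_even : f.Even) :
    2 * ∫⁻ s in Ioi 0, f (s - c / s) = ∫⁻ x, f x := by
  have reflected : ∫⁻ s in Ioi 0, f (s - c / s) =
      ∫⁻ s in Ioi 0, .ofReal (c / s ^ 2) * f (s - c / s) := by
    rw [lintegral_Ioi_comp_const_div hc]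
    refine setLIntegral_congr_fun measurableSet_Ioi fun s _ ↦ ?_
    simp only [div_div_cancel₀ hc.ne']
    rw [← f_even, neg_sub]
  rw [two_mul, lintegral_comp_id_sub_const_div hc]
  nth_rw 2 [reflected]
  rw [← lintegral_add_left (by fun_prop)]
  refine setLIntegral_congr_fun measurableSet_Ioi fun s _ ↦ ?_
  simp only [ENNReal.ofReal_add zero_le_one (div_nonneg hc.le (sq_nonneg s)), ENNReal.ofReal_one,
    add_mul, one_mul]

lemma lintegral_exp_neg_id_sub_const_div_sq (hc : 0 < c) :
    ∫⁻ s in Ioi 0, .ofReal (exp (-(s - c / s) ^ 2)) = .ofReal (√π / 2) := by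
  have doubled := two_mul_lintegral_Ioi_comp_id_sub_const_div hc
    (f := fun v ↦ .ofReal (exp (-v ^ 2))) (by fun_prop) fun v ↦ by simp
  rw [lintegral_exp_neg_sq, ← mul_div_cancel₀ √π two_ne_zero,
    ENNReal.ofReal_mul zero_le_two, ENNReal.ofReal_ofNat] at doubled
  exact (ENNReal.mul_right_inj two_ne_zero ENNReal.ofNat_ne_top).mp doubled

lemma lintegral_Ioi_comp_div_sq {w : ℝ} (hw : 0 < w) (f : ℝ → ℝ≥0∞) :
    ∫⁻ t in Ioi 0, f t = ∫⁻ u in Ioi 0, .ofReal (2 * u / w ^ 2) * f ((u / w) ^ 2) := by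
  have image_eq : (fun u ↦ (u / w) ^ 2) '' Ioi 0 = Ioi 0 := by
    ext y
    constructor
    · rintro ⟨u, hu, rfl⟩
      exact pow_pos (div_pos hu hw) 2
    · intro (hy : 0 < y)
      refine ⟨w * √y, mul_pos hw (sqrt_pos.mpr hy), ?_⟩
      simp only [mul_div_cancel_left₀ _ hw.ne', sq_sqrt hy.le]
  have deriv_eq (u : ℝ) : HasDerivAt (fun u ↦ (u / w) ^ 2) (2 * u / w ^ 2) u := by
    refine (((hasDerivAt_id u).div_const w).pow 2).congr_deriv ?_
    simp only [id_eq, Nat.cast_ofNat, Nat.add_one_sub_one, pow_one]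
    field_simp
  have change := lintegral_image_eq_lintegral_deriv_mul_of_monotoneOn measurableSet_Ioi
    (fun u _ ↦ (deriv_eq u).hasDerivWithinAt)
    (fun u (hu : 0 < u) v _ h ↦ by simp only; gcongr) f
  rwa [image_eq] at change

lemma Gamma_mul_rpow_eq_lintegral {t : ℝ} (ha : 0 < a) (ht : 0 < t) :
    .ofReal (Gamma (a + 1 / 2) * (1 + t) ^ (1 / 2 - a - 1)) =
      ∫⁻ w in Ioi 0, .ofReal (2 * (w ^ (2 * a) * exp (-(1 + t) * w ^ 2))) := by
  have gamma_integral := integral_rpow_mul_exp_neg_mul_rpow (p := 2) (q := 2 * a) (b := 1 + t)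
    two_pos (by linarith) (by linarith)
  rw [show -(2 * a + 1) / 2 = 1 / 2 - a - 1 by ring, show (2 * a + 1) / 2 = a + 1 / 2 by ring]
    at gamma_integral
  simp_rw [rpow_two] at gamma_integral
  rw [← ofReal_integral_eq_lintegral_ofReal, integral_const_mul, gamma_integral]
  · ring_nf
  · exact (integrableOn_rpow_mul_exp_neg_mul_sq (by linarith) (by linarith)).const_mul 2
  · filter_upwards [ae_restrict_mem measurableSet_Ioi] with w (hw : 0 < w)
    simp only [Pi.zero_apply]
    positivity

lemma tricomi_kernel_comp_div_sq (a η : ℝ) {u w : ℝ} (hu : 0 < u) (hw : 0 < w) :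
    2 * u / w ^ 2 * (exp (-η ^ 2 * (u / w) ^ 2) * ((u / w) ^ 2) ^ (a - 1) *
        (2 * (w ^ (2 * a) * exp (-(1 + (u / w) ^ 2) * w ^ 2)))) =
      4 * exp (η ^ 2) * (u ^ (2 * a - 1) * exp (-(u - -η) ^ 2)) *
        exp (-(w - η * u / w) ^ 2) := by
  have powers : 2 * u / w ^ 2 * ((u / w) ^ 2) ^ (a - 1) * w ^ (2 * a) = 2 * u ^ (2 * a - 1) := by
    rw [← rpow_natCast_mul (by positivity), Nat.cast_ofNat, div_rpow hu.le hw.le,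
      show (2 : ℝ) * (a - 1) = 2 * a - 1 - 1 by ring, rpow_sub_one hu.ne', rpow_sub_one hw.ne',
      rpow_sub_one hw.ne']
    field_simp
  have exponentials : exp (-η ^ 2 * (u / w) ^ 2) * exp (-(1 + (u / w) ^ 2) * w ^ 2) =
      exp (η ^ 2) * exp (-(u - -η) ^ 2) * exp (-(w - η * u / w) ^ 2) := by
    rw [← exp_add, ← exp_add, ← exp_add]
    congr 1
    field_simp
    ring
  calc _ = 2 * (2 * u / w ^ 2 * ((u / w) ^ 2) ^ (a - 1) * w ^ (2 * a)) *
        (exp (-η ^ 2 * (u / w) ^ 2) * exp (-(1 + (u / w) ^ 2) * w ^ 2)) := by ring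
    _ = _ := by rw [powers, exponentials]; ring

lemma lintegral_gaussianMoment (ha : 0 < a) (η : ℝ) :
    ∫⁻ u in Ioi 0, .ofReal (u ^ (2 * a - 1) * exp (-(u - η) ^ 2)) =
      .ofReal (gaussianMoment a η) := by
  refine (ofReal_integral_eq_lintegral_ofReal (integrableOn_gaussianMoment ha η) ?_).symm
  filter_upwards [ae_restrict_mem measurableSet_Ioi] with u (hu : 0 < u)
  simp only [Pi.zero_apply]
  positivity

/-- Write `Γ(a + 1/2) (1 + t)^{-a-1/2}` as a Gamma integral over `w`, substitute `t = (u/w)²`, and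
carry out the `w`-integral first: it is the Cauchy–Schlömilch integral, independent of `u`. -/
lemma lintegral_tricomi_kernel (ha : 0 < a) (hη : 0 < η) :
    ∫⁻ t in Ioi 0, .ofReal (exp (-η ^ 2 * t) * t ^ (a - 1) *
        (Gamma (a + 1 / 2) * (1 + t) ^ (1 / 2 - a - 1))) =
      .ofReal (2 * √π * exp (η ^ 2) * gaussianMoment a (-η)) := by
  calc
    _ = ∫⁻ t in Ioi 0, ∫⁻ w in Ioi 0, .ofReal (exp (-η ^ 2 * t) * t ^ (a - 1) *
          (2 * (w ^ (2 * a) * exp (-(1 + t) * w ^ 2)))) := by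
      refine setLIntegral_congr_fun measurableSet_Ioi fun t (ht : 0 < t) ↦ ?_
      rw [lintegral_ofReal_const_mul _ (by positivity), ← Gamma_mul_rpow_eq_lintegral ha ht,
        ← ENNReal.ofReal_mul (by positivity)]
    _ = ∫⁻ w in Ioi 0, ∫⁻ t in Ioi 0, .ofReal (exp (-η ^ 2 * t) * t ^ (a - 1) *
          (2 * (w ^ (2 * a) * exp (-(1 + t) * w ^ 2)))) := by
      refine lintegral_lintegral_swap (Measurable.aemeasurable ?_)
      simp only [Function.uncurry_def]
      fun_prop
    _ = ∫⁻ w in Ioi 0, ∫⁻ u in Ioi 0, .ofReal (4 * exp (η ^ 2) *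
          (u ^ (2 * a - 1) * exp (-(u - -η) ^ 2)) * exp (-(w - η * u / w) ^ 2)) := by
      refine setLIntegral_congr_fun measurableSet_Ioi fun w (hw : 0 < w) ↦ ?_
      rw [lintegral_Ioi_comp_div_sq hw]
      refine setLIntegral_congr_fun measurableSet_Ioi fun u (hu : 0 < u) ↦ ?_
      rw [← ENNReal.ofReal_mul (by positivity), tricomi_kernel_comp_div_sq a η hu hw]
    _ = ∫⁻ u in Ioi 0, ∫⁻ w in Ioi 0, .ofReal (4 * exp (η ^ 2) *
          (u ^ (2 * a - 1) * exp (-(u - -η) ^ 2)) * exp (-(w - η * u / w) ^ 2)) := by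
      refine lintegral_lintegral_swap (Measurable.aemeasurable ?_)
      simp only [Function.uncurry_def]
      fun_prop
    _ = ∫⁻ u in Ioi 0, .ofReal (2 * √π * exp (η ^ 2) *
          (u ^ (2 * a - 1) * exp (-(u - -η) ^ 2))) := by
      refine setLIntegral_congr_fun measurableSet_Ioi fun u (hu : 0 < u) ↦ ?_
      rw [lintegral_ofReal_const_mul _ (by positivity),
        lintegral_exp_neg_id_sub_const_div_sq (mul_pos hη hu), ← ENNReal.ofReal_mul (by positivity)]
      ring_nf
    _ = _ := by
      rw [lintegral_ofReal_const_mul _ (by positivity), lintegral_gaussianMoment ha,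
        ← ENNReal.ofReal_mul (by positivity)]

theorem Gamma_mul_Gamma_mul_tricomiU (ha : 0 < a) (hη : 0 < η) :
    Gamma a * Gamma (a + 1 / 2) * tricomiU a (1 / 2) (η ^ 2) =
      2 * √π * exp (η ^ 2) * gaussianMoment a (-η) := by
  have gaussian_pos := gaussianMoment_pos ha (-η)
  have kernel_integral := congrArg ENNReal.toReal (lintegral_tricomi_kernel ha hη)
  rw [ENNReal.toReal_ofReal (by positivity), ← integral_eq_lintegral_of_nonneg_ae ?_ (by fun_prop)]
    at kernel_integral
  · rw [← kernel_integral, tricomiU, mul_comm (Gamma a), mul_assoc,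
      ← mul_assoc (Gamma a), mul_one_div_cancel (Gamma_pos_of_pos ha).ne', one_mul,
      ← integral_const_mul]
    congr with t
    ring
  · filter_upwards [ae_restrict_mem measurableSet_Ioi] with t (ht : 0 < t)
    simp only [Pi.zero_apply]
    positivity

end Tricomi

section Limit

variable {a η : ℝ}

theorem tricomiU_half_eq (ha : 0 < a) (hη : 0 < η) :
    tricomiU a (1 / 2) (η ^ 2) = √π * exp (η ^ 2) *
      (kummerM (1 / 2 - a) (1 / 2) (-η ^ 2) / Gamma (a + 1 / 2) -
        2 * (η * kummerM (1 - a) (3 / 2) (-η ^ 2)) / Gamma a) := by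
  have Gamma_ne := (Gamma_pos_of_pos ha).ne'
  have Gamma_half_ne := (Gamma_pos_of_pos (add_pos ha one_half_pos)).ne'
  have even_part := gaussianMoment_add_neg ha η
  have odd_part := gaussianMoment_sub_neg ha η
  refine mul_left_cancel₀ (mul_ne_zero Gamma_ne Gamma_half_ne) ?_
  rw [Gamma_mul_Gamma_mul_tricomiU ha hη]
  generalize Gamma (a + 1 / 2) = Γ₂, kummerM (1 / 2 - a) _ _ = M₁ at *
  field_simp
  linear_combination even_part - odd_part

lemma tricomiU_half_pos (ha : 0 < a) (hη : 0 < η) : 0 < tricomiU a (1 / 2) (η ^ 2) := by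
  have Gamma_pos := Gamma_pos_of_pos ha
  have Gamma_half_pos := Gamma_pos_of_pos (add_pos ha one_half_pos)
  have moment_pos := gaussianMoment_pos ha (-η)
  refine pos_of_mul_pos_right ?_ (mul_pos Gamma_pos Gamma_half_pos).le
  rw [Gamma_mul_Gamma_mul_tricomiU ha hη]
  positivity

lemma kummerM_half_sub_pos (ha : 0 < a) (η : ℝ) :
    0 < kummerM (1 / 2 - a) (1 / 2) (-η ^ 2) := by
  refine pos_of_mul_pos_right ?_ (Gamma_pos_of_pos ha).le
  rw [← gaussianMoment_add_neg ha]
  exact add_pos (gaussianMoment_pos ha η) (gaussianMoment_pos ha (-η))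

theorem tendsto_kummerM_combination_div_rpow (ha : 0 < a) (E F : ℝ) :
    Tendsto (fun η ↦ (E * kummerM (1 / 2 - a) (1 / 2) (-η ^ 2) +
        F * η * kummerM (1 - a) (3 / 2) (-η ^ 2)) / η ^ (2 * a - 1)) atTop
      (𝓝 (√π * (E / Gamma a + F / (2 * Gamma (a + 1 / 2))))) := by
  have Gamma_ne := (Gamma_pos_of_pos ha).ne'
  have Gamma_half_ne := (Gamma_pos_of_pos (add_pos ha one_half_pos)).ne'
  have growing := tendsto_gaussianMoment_div_rpow ha
  have decaying := tendsto_gaussianMoment_neg_div_rpow ha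
  have limit := ((growing.add decaying).const_mul (E / Gamma a)).add
    ((growing.sub decaying).const_mul (F / (2 * Gamma (a + 1 / 2))))
  rw [add_zero, sub_zero, ← add_mul, mul_comm _ √π] at limit
  refine limit.congr fun η ↦ ?_
  rw [← add_div, ← sub_div, gaussianMoment_add_neg ha, gaussianMoment_sub_neg ha]
  generalize Gamma (a + 1 / 2) = Γ₂, kummerM (1 / 2 - a) _ _ = M₁, η ^ (2 * a - 1) = P at *
  field_simp

/-- The quotient `F / U` is designed so that the connection formula for `U` cancels the bracket
left after substituting `E`. -/
lemma limit_coefficient_eq_half (ha : 0 < a) (hη : 0 < η) {C E F : ℝ}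
    (hF : F = C * kummerM a (1 / 2) (η ^ 2) / tricomiU a (1 / 2) (η ^ 2))
    (hE : E = -η * kummerM (1 - a) (3 / 2) (-η ^ 2) * F /
      kummerM (1 / 2 - a) (1 / 2) (-η ^ 2)) :
    √π * (E / Gamma a + F / (2 * Gamma (a + 1 / 2))) = C / 2 := by
  have Gamma_ne := (Gamma_pos_of_pos ha).ne'
  have Gamma_half_ne := (Gamma_pos_of_pos (add_pos ha one_half_pos)).ne'
  have U_pos := tricomiU_half_pos ha hη
  have M_pos := kummerM_half_sub_pos ha η
  have connection := tricomiU_half_eq ha hη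
  have transformation : kummerM a (1 / 2) (η ^ 2) =
      exp (η ^ 2) * kummerM (1 / 2 - a) (1 / 2) (-η ^ 2) := by
    rw [kummerM_sub_neg a (ne_neg_natCast_of_pos one_half_pos), ← mul_assoc, ← exp_add,
      add_neg_cancel, exp_zero, one_mul]
  rw [transformation] at hF
  generalize kummerM (1 / 2 - a) _ _ = M₁, kummerM (1 - a) _ _ = M₂, tricomiU _ _ _ = U,
    Gamma (a + 1 / 2) = Γ₂ at *
  calc √π * (E / Gamma a + F / (2 * Γ₂))
      = √π * (M₁ / Γ₂ - 2 * (η * M₂) / Gamma a) * F / (2 * M₁) := by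
        rw [hE]
        field_simp
        ring
    _ = U / exp (η ^ 2) * F / (2 * M₁) := by
        rw [connection]
        field_simp
    _ = C / 2 := by
        rw [hF]
        field_simp

lemma tendsto_similarity_variable {d x : ℝ} (hd : 0 < d) (hx : 0 < x) :
    Tendsto (fun t ↦ x / (2 * √(d * t))) (𝓝[>] 0) atTop := by
  have denominator : Tendsto (fun t ↦ 2 * √(d * t)) (𝓝[>] 0) (𝓝[>] 0) := by
    refine tendsto_nhdsWithin_iff.mpr ⟨?_, ?_⟩
    · have : Continuous fun t ↦ 2 * √(d * t) := by fun_prop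
      exact (this.tendsto' 0 0 (by simp)).mono_left nhdsWithin_le_nhds
    · filter_upwards [self_mem_nhdsWithin] with t (ht : 0 < t)
      exact mul_pos two_pos (sqrt_pos.mpr (mul_pos hd ht))
  exact denominator.inv_tendsto_nhdsGT_zero.const_mul_atTop hx

lemma rpow_half_mul_similarity_variable_rpow (α : ℝ) {d x t : ℝ} (hd : 0 < d) (hx : 0 < x)
    (ht : 0 < t) :
    t ^ (α / 2) * (x / (2 * √(d * t))) ^ α = x ^ α / (2 ^ α * d ^ (α / 2)) := by
  rw [div_rpow hx.le (by positivity), mul_rpow zero_le_two (sqrt_nonneg _), sqrt_eq_rpow,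
    ← rpow_mul (by positivity), mul_rpow hd.le ht.le, one_div_mul_eq_div]
  field_simp

theorem statement_14_general (α ds Ti ν ω : ℝ) (hα : -1 < α) (hds : 0 < ds) (hνω : 0 < ν * ω)
    (Fs Es : ℝ)
    (hFs : Fs = -Ti * (2 : ℝ) ^ (α + 1) * ds ^ (α / 2) *
      kummerM (α / 2 + 1 / 2) (1 / 2) (ν ^ 2 * ω ^ 2) /
        tricomiU (α / 2 + 1 / 2) (1 / 2) (ν ^ 2 * ω ^ 2))
    (hEs : Es = -ν * ω * kummerM (-α / 2 + 1 / 2) (3 / 2) (-(ν ^ 2 * ω ^ 2)) * Fs /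
      kummerM (-α / 2) (1 / 2) (-(ν ^ 2 * ω ^ 2)))
    (Ψs : ℝ → ℝ → ℝ)
    (hΨs : ∀ x t : ℝ, Ψs x t =
      t ^ (α / 2) *
        (Es * kummerM (-α / 2) (1 / 2) (-(x / (2 * √(ds * t))) ^ 2)
          + Fs * (x / (2 * √(ds * t))) *
              kummerM (-α / 2 + 1 / 2) (3 / 2) (-(x / (2 * √(ds * t))) ^ 2)))
    (x : ℝ) (hx : 0 < x) :
    Tendsto (fun t ↦ Ψs x t) (𝓝[>] 0) (𝓝 (-Ti * x ^ α)) := by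
  obtain ⟨a, rfl⟩ : ∃ a, α = 2 * a - 1 := ⟨α / 2 + 1 / 2, by ring⟩
  have ha : 0 < a := by linarith
  rw [show (2 * a - 1) / 2 + 1 / 2 = a by ring, ← mul_pow] at hFs
  rw [show -(2 * a - 1) / 2 + 1 / 2 = 1 - a by ring, show -(2 * a - 1) / 2 = 1 / 2 - a by ring,
    ← mul_pow, neg_mul ν] at hEs
  simp_rw [show -(2 * a - 1) / 2 + 1 / 2 = 1 - a by ring,
    show -(2 * a - 1) / 2 = 1 / 2 - a by ring] at hΨs
  have limit := ((tendsto_kummerM_combination_div_rpow ha Es Fs).comp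
    (tendsto_similarity_variable hds hx)).const_mul
      (x ^ (2 * a - 1) / (2 ^ (2 * a - 1) * ds ^ ((2 * a - 1) / 2)))
  have limit_value : x ^ (2 * a - 1) / (2 ^ (2 * a - 1) * ds ^ ((2 * a - 1) / 2)) *
      (√π * (Es / Gamma a + Fs / (2 * Gamma (a + 1 / 2)))) = -Ti * x ^ (2 * a - 1) := by
    rw [limit_coefficient_eq_half ha hνω hFs hEs, rpow_add_one two_ne_zero]
    field_simp
  rw [limit_value] at limit
  refine limit.congr' ?_
  filter_upwards [self_mem_nhdsWithin] with t (ht : 0 < t)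
  have similarity_pos : 0 < x / (2 * √(ds * t)) := by positivity
  rw [← rpow_half_mul_similarity_variable_rpow (2 * a - 1) hds hx ht, hΨs, Function.comp_apply,
    mul_assoc, mul_div_cancel₀ _ (rpow_pos_of_pos similarity_pos _).ne']

end Limit

/-- with the displayed coefficients `F_s`, `E_s`, the solid-phase temperature
`Ψ_s(x,t)` satisfies `lim_{t→0⁺} Ψ_s(x,t) = −T_i x^α` for every `x > 0`. -/
theorem statement_14 (α ds Ti ν ω : ℝ) (hα : 0 < α) (hαnotint : ∀ n : ℤ, α ≠ n)
    (hds : 0 < ds) (hTi : 0 < Ti) (hν : 0 < ν) (hω : 0 < ω)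
    (Fs Es : ℝ)
    (hFs : Fs = -Ti * (2:ℝ) ^ (α + 1) * ds ^ (α / 2) *
      kummerM (α / 2 + 1 / 2) (1 / 2) (ν ^ 2 * ω ^ 2) /
        tricomiU (α / 2 + 1 / 2) (1 / 2) (ν ^ 2 * ω ^ 2))
    (hEs : Es = -ν * ω * kummerM (-α / 2 + 1 / 2) (3 / 2) (-(ν ^ 2 * ω ^ 2)) * Fs /
      kummerM (-α / 2) (1 / 2) (-(ν ^ 2 * ω ^ 2)))
    (Ψs : ℝ → ℝ → ℝ)
    (hΨs : ∀ x t : ℝ, Ψs x t =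
      t ^ (α / 2) *
        (Es * kummerM (-α / 2) (1 / 2) (-(x / (2 * Real.sqrt (ds * t))) ^ 2)
          + Fs * (x / (2 * Real.sqrt (ds * t))) *
              kummerM (-α / 2 + 1 / 2) (3 / 2) (-(x / (2 * Real.sqrt (ds * t))) ^ 2))) :
    ∀ x : ℝ, 0 < x →
      Filter.Tendsto (fun t : ℝ => Ψs x t) (nhdsWithin 0 (Set.Ioi 0))
        (nhds (-Ti * x ^ α)) := by
  exact statement_14_general α ds Ti ν ω (by linarith) hds (mul_pos hν hω) Fs Es hFs hEs Ψs hΨs
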